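/- Let m ≥ 3 be an integer and ε ∈ (0,1) be fixed, and for α ∈ (ε,1) define l_ε(α) = ∫_{-1+α}^{0} [2( (1/α - 1/(1+u)) + (ε^{m-2}/(m-1))((1+u)^{-(m-1)} - α^{-(m-1)}) )]^{-1/2} du. Then l_ε(α) → +∞ as α → ε⁺. -/

import Mathlib

open MeasureTheory Filter

/-- The potential of the regularized equilibrium equation in the variable `v = 1 + u`, with
regularization exponent `n + 2`. -/
noncomputable def memsPotential (n : ℕ) (ε v : ℝ) : ℝ :=
  ε ^ n / ((n : ℝ) + 1) * (v ^ (n + 1))⁻¹ - 1 / v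

lemma hasDerivAt_memsPotential (n : ℕ) (ε : ℝ) {v : ℝ} (hv : v ≠ 0) :
    HasDerivAt (memsPotential n ε) ((v ^ n - ε ^ n) / v ^ (n + 2)) v := by
  have hpow := ((hasDerivAt_pow (n + 1) v).fun_inv (pow_ne_zero _ hv)).const_mul
    (ε ^ n / ((n : ℝ) + 1))
  have hinv := hasDerivAt_inv hv
  simp only [← one_div] at hinv
  have hn : (n : ℝ) + 1 ≠ 0 := by positivity
  refine (hpow.fun_sub hinv).congr_deriv ?_
  push_cast
  field_simp
  ring

lemma pow_sub_pow_le_mul_sub (n : ℕ) {a b : ℝ} (ha : 0 ≤ a) (hab : a ≤ b) (hb : b ≤ 1) :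
    b ^ n - a ^ n ≤ n * (b - a) := by
  induction n with
  | zero => simp
  | succ k ih =>
    have hbk : b ^ k ≤ 1 := pow_le_one₀ (ha.trans hab) hb
    have hmono : a ^ k ≤ b ^ k := pow_le_pow_left₀ ha hab k
    push_cast
    rw [pow_succ, pow_succ]
    nlinarith [mul_nonneg (sub_nonneg.2 hbk) (sub_nonneg.2 hab),
      mul_nonneg (sub_nonneg.2 hmono) (sub_nonneg.2 (hab.trans hb))]

/-- Near the saddle the potential grows at most quadratically. -/
lemma memsPotential_sub_le (n : ℕ) {ε α v : ℝ} (hε : 0 < ε) (hα : ε ≤ α) (hαv : α ≤ v)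
    (hv : v ≤ 1) :
    2 * (memsPotential n ε v - memsPotential n ε α) ≤ n / ε ^ (n + 2) * (v - ε) ^ 2 := by
  have hderiv : ∀ x ∈ Set.Icc ε 1, HasDerivAt
      (fun x => n / ε ^ (n + 2) * (x - ε) ^ 2 - 2 * memsPotential n ε x)
      (n / ε ^ (n + 2) * (2 * (x - ε)) - 2 * ((x ^ n - ε ^ n) / x ^ (n + 2))) x := by
    intro x hx
    have hquad := (((hasDerivAt_id x).sub_const ε).pow 2).const_mul ((n : ℝ) / ε ^ (n + 2))
    have hpot := (hasDerivAt_memsPotential n ε (hε.trans_le hx.1).ne').const_mul 2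
    refine (hquad.fun_sub hpot).congr_deriv ?_
    simp
  have hmono : MonotoneOn
      (fun x => n / ε ^ (n + 2) * (x - ε) ^ 2 - 2 * memsPotential n ε x) (Set.Icc ε 1) := by
    refine monotoneOn_of_deriv_nonneg (convex_Icc _ _)
      (fun x hx => (hderiv x hx).continuousAt.continuousWithinAt)
      (fun x hx => (hderiv x (interior_subset hx)).differentiableAt.differentiableWithinAt) ?_
    intro x hx
    have hx := interior_subset hx
    rw [(hderiv x hx).deriv]
    have hle : (x ^ n - ε ^ n) / x ^ (n + 2) ≤ n * (x - ε) / ε ^ (n + 2) :=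
      div_le_div₀ (mul_nonneg n.cast_nonneg (sub_nonneg.2 hx.1))
        (pow_sub_pow_le_mul_sub n hε.le hx.1 hx.2) (by positivity)
        (pow_le_pow_left₀ hε.le hx.1 _)
    have heq : (n : ℝ) / ε ^ (n + 2) * (2 * (x - ε)) = 2 * (n * (x - ε) / ε ^ (n + 2)) := by ring
    linarith
  have hle := hmono ⟨hα, hαv.trans hv⟩ ⟨hα.trans hαv, hv⟩ hαv
  have hnonneg : 0 ≤ n / ε ^ (n + 2) * (α - ε) ^ 2 := by positivity
  simp only at hle
  linarith

/-- Away from the saddle the potential grows at least linearly. -/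
lemma le_memsPotential_sub (n : ℕ) {ε α v : ℝ} (hε : 0 < ε) (hα : ε < α) (hαv : α ≤ v)
    (hv : v ≤ 1) :
    (α ^ n - ε ^ n) * (v - α) ≤ memsPotential n ε v - memsPotential n ε α := by
  have hα0 : 0 < α := hε.trans hα
  have hderiv : ∀ x ∈ Set.Icc α 1, HasDerivAt (memsPotential n ε)
      ((x ^ n - ε ^ n) / x ^ (n + 2)) x :=
    fun x hx => hasDerivAt_memsPotential n ε (hα0.trans_le hx.1).ne'
  refine (convex_Icc α 1).mul_sub_le_image_sub_of_le_deriv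
    (fun x hx => (hderiv x hx).continuousAt.continuousWithinAt)
    (fun x hx => (hderiv x (interior_subset hx)).differentiableAt.differentiableWithinAt) ?_
    α ⟨le_rfl, hαv.trans hv⟩ v ⟨hαv, hv⟩ hαv
  intro x hx
  have hx := interior_subset hx
  have hx0 : 0 < x := hα0.trans_le hx.1
  rw [(hderiv x hx).deriv, le_div_iff₀ (by positivity)]
  have hαx : α ^ n ≤ x ^ n := pow_le_pow_left₀ hα0.le hx.1 n
  have hεα : ε ^ n ≤ α ^ n := pow_le_pow_left₀ hε.le hα.le n
  nlinarith [mul_le_of_le_one_right (sub_nonneg.2 hεα)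
    (pow_le_one₀ (n := n + 2) hx0.le hx.2)]

lemma integrableOn_inv_sqrt_memsPotential {n : ℕ} (hn : n ≠ 0) {ε α : ℝ} (hε : 0 < ε)
    (hα : ε < α) :
    IntegrableOn (fun u => (√(2 * (memsPotential n ε (1 + u) - memsPotential n ε α)))⁻¹)
      (Set.Ioo (-1 + α) 0) := by
  have hk : 0 < α ^ n - ε ^ n := sub_pos.2 (pow_lt_pow_left₀ hα hε.le hn)
  have hmeas : Measurable
      (fun u => (√(2 * (memsPotential n ε (1 + u) - memsPotential n ε α)))⁻¹) := by
    unfold memsPotential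
    fun_prop
  have hrpow : IntegrableOn (fun u : ℝ => (u + (1 - α)) ^ (-(1 / 2) : ℝ))
      (Set.Ioo (-1 + α) 0) := by
    rcases le_total 0 (-1 + α) with h | h
    · simp [Set.Ioo_eq_empty_of_le h]
    · have hinteg := (intervalIntegral.intervalIntegrable_rpow' (a := 0) (b := 1 - α)
        (r := -(1 / 2)) (by norm_num)).comp_add_right (1 - α)
      have hIoo := (intervalIntegrable_iff_integrableOn_Ioo_of_le (by linarith)).1 hinteg
      simpa only [sub_add_cancel, zero_add, zero_sub, sub_self, neg_sub, neg_add_eq_sub]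
        using hIoo
  refine (hrpow.const_mul (√(2 * (α ^ n - ε ^ n)))⁻¹).mono' hmeas.aestronglyMeasurable ?_
  filter_upwards [ae_restrict_mem measurableSet_Ioo] with u hu
  have hpos : 0 < u + (1 - α) := by linarith [hu.1]
  have hle := le_memsPotential_sub n (v := 1 + u) hε hα (by linarith) (by linarith [hu.2])
  rw [Real.norm_of_nonneg (by positivity), Real.rpow_neg hpos.le, ← Real.sqrt_eq_rpow,
    ← mul_inv, ← Real.sqrt_mul (by positivity)]
  refine inv_anti₀ (by positivity) (Real.sqrt_le_sqrt ?_)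
  linarith

lemma log_le_integral_inv_sqrt_memsPotential {n : ℕ} (hn : n ≠ 0) {ε α : ℝ} (hε : 0 < ε)
    (hα : ε < α) (hα1 : α < 1) :
    (√(n / ε ^ (n + 2)))⁻¹ * Real.log ((1 - ε) / (α - ε)) ≤
      ∫ u in Set.Ioo (-1 + α) 0,
        (√(2 * (memsPotential n ε (1 + u) - memsPotential n ε α)))⁻¹ := by
  have hlog : ∫ u in Set.Ioo (-1 + α) 0, (u + (1 - ε))⁻¹ = Real.log ((1 - ε) / (α - ε)) := by
    rw [← integral_Ioc_eq_integral_Ioo, ← intervalIntegral.integral_of_le (by linarith),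
      intervalIntegral.integral_comp_add_right (fun x : ℝ => x⁻¹),
      integral_inv_of_pos (by linarith) (by linarith)]
    congr 2 <;> ring
  have hinteg : IntegrableOn (fun u : ℝ => (u + (1 - ε))⁻¹) (Set.Ioo (-1 + α) 0) := by
    refine (ContinuousOn.integrableOn_Icc ?_).mono_set Set.Ioo_subset_Icc_self
    refine ContinuousOn.inv₀ (by fun_prop) fun u hu => ?_
    have hpos : 0 < u + (1 - ε) := by linarith [hu.1]
    exact hpos.ne'
  rw [← hlog, ← integral_const_mul]
  refine setIntegral_mono_on (hinteg.const_mul _)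
    (integrableOn_inv_sqrt_memsPotential hn hε hα) measurableSet_Ioo fun u hu => ?_
  have hk : 0 < α ^ n - ε ^ n := sub_pos.2 (pow_lt_pow_left₀ hα hε.le hn)
  have hu0 : 0 < 1 + u - α := by linarith [hu.1]
  have hlower := le_memsPotential_sub n (v := 1 + u) hε hα (by linarith) (by linarith [hu.2])
  have hpos : 0 < memsPotential n ε (1 + u) - memsPotential n ε α :=
    (mul_pos hk hu0).trans_le hlower
  have hupper := memsPotential_sub_le n (v := 1 + u) hε hα.le (by linarith) (by linarith [hu.2])
  rw [← mul_inv]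
  gcongr
  refine (Real.sqrt_le_sqrt hupper).trans_eq ?_
  rw [Real.sqrt_mul (by positivity), Real.sqrt_sq (by linarith)]
  ring

/-- Divergence of the regularized trajectory half-length at the saddle: for fixed
`ε ∈ (0,1)` and integer `m ≥ 3`, `l_ε(α) → +∞` as `α → ε⁺`, where
`l_ε(α) = ∫_{-1+α}^0 [2((1/α - 1/(1+u)) + (ε^(m-2)/(m-1))((1+u)^{-(m-1)} - α^{-(m-1)}))]^{-1/2} du`. -/
theorem stmt_18 (m : ℕ) (hm : 3 ≤ m) (ε : ℝ) (hε : ε ∈ Set.Ioo (0 : ℝ) 1) :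
    Tendsto
      (fun α : ℝ => ∫ u in Set.Ioo (-1 + α) (0 : ℝ),
        (Real.sqrt (2 * ((1 / α - 1 / (1 + u))
          + (ε ^ (m - 2) / ((m : ℝ) - 1))
            * (((1 + u) ^ (m - 1))⁻¹ - (α ^ (m - 1))⁻¹))))⁻¹)
      (nhdsWithin ε (Set.Ioi ε)) atTop := by
  obtain ⟨n, rfl⟩ : ∃ n, m = n + 2 := ⟨m - 2, by lia⟩
  obtain ⟨hε0, hε1⟩ := hε
  have hn : n ≠ 0 := by lia
  have hsub : Tendsto (fun α => α - ε) (nhdsWithin ε (Set.Ioi ε))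
      (nhdsWithin 0 (Set.Ioi 0)) := by
    refine tendsto_nhdsWithin_iff.2 ⟨?_, ?_⟩
    · exact ((continuous_sub_right ε).tendsto' ε 0 (sub_self ε)).mono_left nhdsWithin_le_nhds
    · filter_upwards [self_mem_nhdsWithin] with α hα
      exact sub_pos.2 (Set.mem_Ioi.1 hα)
  have hratio : Tendsto (fun α => (1 - ε) / (α - ε)) (nhdsWithin ε (Set.Ioi ε)) atTop := by
    simpa only [div_eq_mul_inv, Function.comp_def] using
      (tendsto_inv_nhdsGT_zero.comp hsub).const_mul_atTop (sub_pos.2 hε1)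
  have hn0 : (0 : ℝ) < n := Nat.cast_pos.2 (Nat.pos_of_ne_zero hn)
  have hlog := (Real.tendsto_log_atTop.comp hratio).const_mul_atTop
    (show 0 < (√(n / ε ^ (n + 2)))⁻¹ by positivity)
  refine tendsto_atTop_mono' _ ?_ hlog
  filter_upwards [Ioo_mem_nhdsGT hε1] with α hα
  refine (log_le_integral_inv_sqrt_memsPotential hn hε0 hα.1 hα.2).trans_eq ?_
  congr 1 with u
  congr 3
  simp only [memsPotential, Nat.add_sub_cancel, show n + 2 - 1 = n + 1 from rfl]
  push_cast
  ring
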